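/- Let K = ⋃_{ℓ=1}^L [a_ℓ, b_ℓ] ⊆ [−1,1] with −1 = a_1 < b_1 < a_2 < ⋯ < a_L < b_L = 1, let w be continuous and strictly positive on K, and let N ≥ 1. Assume the minimizer U of ‖P/w‖_{L1(K)} among monic polynomials of degree N is unique, and for each d ≥ N let V_d be any monic polynomial of degree N minimizing sslash · sslash_d among monic polynomials of degree N. Then the relative error δ_d := 1 − sslash V_d sslash_d / ‖V_d/w‖_{L1(K)} satisfies δ_d ≥ 0 for all d ≥ N and δ_d → 0 as d → ∞. -/

import Mathlib

open MeasureTheory Filter Polynomial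

/-- The `(d+1) × (d+1)` symmetric Toeplitz matrix built from a vector `y ∈ ℝ^{d+1}`,
with entries `y_{|i−j|}`. -/
noncomputable def toepFin (d : ℕ) (y : Fin (d + 1) → ℝ) :
    Matrix (Fin (d + 1)) (Fin (d + 1)) ℝ :=
  fun i j => y ⟨(((i : ℕ) : ℤ) - ((j : ℕ) : ℤ)).natAbs, by omega⟩

/-- The transplantation `P_ℓ(x) = P(((bℓ−aℓ)x + aℓ + bℓ)/2)` of a polynomial
from `[aℓ, bℓ]` to `[-1, 1]`. -/
noncomputable def transplant (aℓ bℓ : ℝ) (P : Polynomial ℝ) : Polynomial ℝ :=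
  P.comp (Polynomial.C ((bℓ - aℓ) / 2) * Polynomial.X + Polynomial.C ((aℓ + bℓ) / 2))

/-- The entries `J^ℓ_{k,n} = ∫_0^π cos(kθ) sin((n+1)θ) / w_ℓ(cos θ) dθ`, where
`w_ℓ(x) = w(((bℓ−aℓ)x + aℓ + bℓ)/2)` is the transplantation of the weight `w`. -/
noncomputable def Jent (aℓ bℓ : ℝ) (w : ℝ → ℝ) (k n : ℕ) : ℝ :=
  ∫ θ in (0:ℝ)..Real.pi,
    Real.cos (k * θ) * Real.sin ((n + 1) * θ) /
      w (((bℓ - aℓ) * Real.cos θ + aℓ + bℓ) / 2)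

/-- The weighted `L1` norm `‖P/w‖_{L1(K)} = ∑_ℓ ∫_{a_ℓ}^{b_ℓ} |P(t)|/w(t) dt`
on `K = ⋃_{ℓ<L} [a ℓ, b ℓ]`. -/
noncomputable def L1K (L : ℕ) (a b : ℕ → ℝ) (w : ℝ → ℝ) (P : Polynomial ℝ) : ℝ :=
  ∑ ℓ ∈ Finset.range L, ∫ t in (a ℓ)..(b ℓ), |P.eval t| / w t

/-- The ersatz norm `⫽P⫽_d`: the infimum of
`∑_ℓ ((b_ℓ−a_ℓ)/2)(y^{ℓ,+}_0 + y^{ℓ,−}_0)` over vectors `y^{ℓ,±} ∈ ℝ^{d+1}` with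
`y^{ℓ,+} − y^{ℓ,−} = J^{ℓ,d} W^ℓ p` and `Toep_d(y^{ℓ,±}) ⪰ 0`, where `q ℓ = W^ℓ p` is
the vector of second-kind Chebyshev coefficients of the transplantation `P_ℓ`. -/
noncomputable def ersatz (L N d : ℕ) (a b : ℕ → ℝ) (w : ℝ → ℝ) (P : Polynomial ℝ) : ℝ :=
  sInf { s : ℝ |
    ∃ q : ℕ → Fin (N + 1) → ℝ,
      (∀ ℓ < L, transplant (a ℓ) (b ℓ) P
          = ∑ n : Fin (N + 1), Polynomial.C (q ℓ n) * Polynomial.Chebyshev.U ℝ ((n : ℕ) : ℤ)) ∧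
      ∃ yp ym : ℕ → Fin (d + 1) → ℝ,
        (∀ ℓ < L, ∀ k : Fin (d + 1),
            yp ℓ k - ym ℓ k
              = ∑ n : Fin (N + 1), Jent (a ℓ) (b ℓ) w (k : ℕ) (n : ℕ) * q ℓ n) ∧
        (∀ ℓ < L, (toepFin d (yp ℓ)).PosSemidef ∧ (toepFin d (ym ℓ)).PosSemidef) ∧
        s = ∑ ℓ ∈ Finset.range L, ((b ℓ - a ℓ) / 2) * (yp ℓ 0 + ym ℓ 0) }

/-! The substitution `t = ((b - a) cos θ + a + b) / 2` turns the weighted norm of `P` on `[a, b]`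
into the `L¹` norm on `[0, π]` of a continuous function `g`, and turns a feasible pair `y⁺, y⁻`
into a splitting of the first `d + 1` cosine moments of `g`. The moments of `g⁺` and `g⁻` are such
a splitting, so `⫽P⫽_d ≤ ‖P/w‖`. Conversely, if `Toep_d(y)` is positive semidefinite, then the
Fejér sum of `y` is a nonnegative function with integral `y₀`; so a feasible pair costs at least
the `L¹` norm of the Fejér mean of `g`. Fejér means converge in `L¹`, and they do so uniformly
relative to the norm on the finite-dimensional space of the `g` that come from polynomials of
degree at most `N`. Hence `(1 - ε) ‖P/w‖ ≤ ⫽P⫽_d` for all these `P` at once, as soon as `d` is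
large. -/

section

open Real intervalIntegral

section Trigonometric

/-- Integration over the half period `[0, π]`, as a linear functional. -/
noncomputable def intZeroPi : C(ℝ, ℝ) →ₗ[ℝ] ℝ where
  toFun f := ∫ θ in (0 : ℝ)..π, f θ
  map_add' f g := integral_add (f.continuous.intervalIntegrable _ _)
    (g.continuous.intervalIntegrable _ _)
  map_smul' c f := integral_const_mul c f

/-- The cosine harmonic `θ ↦ cos (n θ)`. -/
noncomputable def cosMode (n : ℕ) : C(ℝ, ℝ) := ⟨fun θ => cos (n * θ), by fun_prop⟩

/-- The sine harmonic `θ ↦ sin (n θ)`. -/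
noncomputable def sinMode (n : ℕ) : C(ℝ, ℝ) := ⟨fun θ => sin (n * θ), by fun_prop⟩

lemma intZeroPi_apply (f : C(ℝ, ℝ)) : intZeroPi f = ∫ θ in (0 : ℝ)..π, f θ := rfl

lemma cosMode_apply (n : ℕ) (θ : ℝ) : cosMode n θ = cos (n * θ) := rfl

lemma sinMode_apply (n : ℕ) (θ : ℝ) : sinMode n θ = sin (n * θ) := rfl

lemma intZeroPi_mono {f g : C(ℝ, ℝ)} (h : ∀ θ ∈ Set.Icc 0 π, f θ ≤ g θ) :
    intZeroPi f ≤ intZeroPi g :=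
  integral_mono_on pi_pos.le (f.continuous.intervalIntegrable _ _)
    (g.continuous.intervalIntegrable _ _) h

/-- The `L¹` norm `∫₀^π |f|`; only a seminorm, since it ignores `f` outside `[0, π]`. -/
noncomputable def l1ZeroPi : Seminorm ℝ C(ℝ, ℝ) :=
  Seminorm.of (fun f => intZeroPi |f|)
    (fun f g => by
      rw [← map_add]
      exact intZeroPi_mono fun θ _ => abs_add_le (f θ) (g θ))
    (fun c f => by
      have habs : |c • f| = ‖c‖ • |f| := by
        ext θ
        simp [abs_mul]
      rw [habs, map_smul, smul_eq_mul])

lemma l1ZeroPi_apply (f : C(ℝ, ℝ)) : l1ZeroPi f = intZeroPi |f| := rfl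

lemma l1ZeroPi_le_of_abs_le {f g : C(ℝ, ℝ)} (h : ∀ θ ∈ Set.Icc 0 π, |f θ| ≤ g θ) :
    l1ZeroPi f ≤ intZeroPi g :=
  intZeroPi_mono h

lemma l1ZeroPi_of_nonneg {f : C(ℝ, ℝ)} (hf : 0 ≤ f) : l1ZeroPi f = intZeroPi f := by
  rw [l1ZeroPi_apply, abs_of_nonneg hf]

lemma abs_intZeroPi_le (f : C(ℝ, ℝ)) : |intZeroPi f| ≤ l1ZeroPi f :=
  abs_integral_le_integral_abs pi_pos.le

lemma cosMode_natAbs_sub (i j : ℕ) :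
    cosMode ((i : ℤ) - j).natAbs = cosMode i * cosMode j + sinMode i * sinMode j := by
  ext θ
  have hcast : ((((i : ℤ) - j).natAbs : ℕ) : ℝ) * θ = |(i : ℝ) - j| * θ := by
    rw [Nat.cast_natAbs]; push_cast; rfl
  have hcos : cos (|(i : ℝ) - j| * θ) = cos ((i - j) * θ) := by
    rcases abs_choice ((i : ℝ) - j) with h | h <;> simp only [h, neg_mul, cos_neg]
  simp only [cosMode_apply, sinMode_apply, ContinuousMap.add_apply, ContinuousMap.mul_apply]
  rw [hcast, hcos, sub_mul, cos_sub]

lemma intZeroPi_cosMode_mul_cosMode (i j : ℕ) :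
    intZeroPi (cosMode i * cosMode j) = if i = j then (if j = 0 then π else π / 2) else 0 := by
  have hT : intZeroPi (cosMode i * cosMode j) =
      ∫ x, (Chebyshev.T ℝ i).eval x * (Chebyshev.T ℝ j).eval x ∂Chebyshev.measureT := by
    rw [Chebyshev.integral_measureT_eq_integral_cos]
    simp [intZeroPi_apply, cosMode_apply]
  rw [hT]
  split_ifs with hij hj
  · subst hij hj
    exact Chebyshev.integral_eval_T_real_mul_self_measureT_zero
  · subst hij
    exact Chebyshev.integral_T_real_mul_self_measureT_of_ne_zero hj
  · exact Chebyshev.integral_eval_T_real_mul_eval_T_real_measureT_of_ne hij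

lemma cosMode_zero : cosMode 0 = 1 := by
  ext θ
  simp [cosMode_apply]

lemma intZeroPi_cosMode (n : ℕ) : intZeroPi (cosMode n) = if n = 0 then π else 0 := by
  simpa [cosMode_zero] using intZeroPi_cosMode_mul_cosMode n 0

lemma intZeroPi_sinMode_mul_sinMode (m n : ℕ) :
    intZeroPi (sinMode (m + 1) * sinMode (n + 1)) = if m = n then π / 2 else 0 := by
  have hsin : sinMode (m + 1) * sinMode (n + 1) =
      cosMode (((m + 1 : ℕ) : ℤ) - (n + 1 : ℕ)).natAbs - cosMode (m + 1) * cosMode (n + 1) := by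
    rw [cosMode_natAbs_sub, add_sub_cancel_left]
  have hnatAbs : (((m + 1 : ℕ) : ℤ) - (n + 1 : ℕ)).natAbs = 0 ↔ m = n := by omega
  rw [hsin, map_sub, intZeroPi_cosMode, intZeroPi_cosMode_mul_cosMode]
  simp only [hnatAbs, Nat.add_right_cancel_iff, Nat.add_eq_zero_iff, one_ne_zero, and_false,
    if_false]
  split_ifs <;> ring

end Trigonometric

section Toeplitz

lemma sum_natAbs_sub_eq (f : ℕ → ℝ) (n : ℕ) :
    ∑ j ∈ Finset.range n, f ((n : ℤ) - j).natAbs = ∑ k ∈ Finset.range n, f (k + 1) := by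
  rw [← Finset.sum_range_reflect]
  refine Finset.sum_congr rfl fun k hk => ?_
  have := Finset.mem_range.mp hk
  congr 1
  omega

lemma sum_sum_natAbs_sub (f : ℕ → ℝ) (n : ℕ) :
    ∑ i ∈ Finset.range n, ∑ j ∈ Finset.range n, f ((i : ℤ) - j).natAbs =
      ∑ k ∈ Finset.range n, (if k = 0 then 1 else 2) * (n - k) * f k := by
  induction n with
  | zero => simp
  | succ n ih =>
    have hborder : ∑ i ∈ Finset.range n, f ((i : ℤ) - n).natAbs =
        ∑ k ∈ Finset.range n, f (k + 1) := by
      rw [← sum_natAbs_sub_eq]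
      refine Finset.sum_congr rfl fun k _ => ?_
      congr 1
      omega
    have hsplit : ∑ k ∈ Finset.range (n + 1), (if k = 0 then (1 : ℝ) else 2) *
          ((n + 1 : ℕ) - k) * f k =
        ∑ k ∈ Finset.range (n + 1), (if k = 0 then (1 : ℝ) else 2) * (n - k) * f k +
          ∑ k ∈ Finset.range (n + 1), (if k = 0 then (1 : ℝ) else 2) * f k := by
      rw [← Finset.sum_add_distrib]
      refine Finset.sum_congr rfl fun k _ => ?_
      push_cast
      ring
    have hcross : ∑ k ∈ Finset.range (n + 1), (if k = 0 then (1 : ℝ) else 2) * f k =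
        f 0 + 2 * ∑ k ∈ Finset.range n, f (k + 1) := by
      rw [Finset.sum_range_succ', Finset.mul_sum]
      simp [add_comm]
    rw [hsplit, hcross, Finset.sum_range_succ (fun k => _ * ((n : ℝ) - k) * f k), ← ih]
    simp only [Finset.sum_range_succ _ n, Finset.sum_add_distrib, hborder, sum_natAbs_sub_eq]
    simp only [sub_self, Int.natAbs_zero, mul_zero, zero_mul]
    ring

lemma sum_sum_toepFin (d : ℕ) (y : Fin (d + 1) → ℝ) :
    ∑ i, ∑ j, toepFin d y i j =
      ∑ k : Fin (d + 1), (if (k : ℕ) = 0 then 1 else 2) * (d + 1 - k) * y k := by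
  obtain ⟨f, rfl⟩ := Fin.val_injective.surjective_comp_right y
  have h := sum_sum_natAbs_sub f (d + 1)
  simp only [Finset.sum_range, Nat.cast_add_one] at h
  exact h

lemma star_dotProduct_toepFin_mulVec (d : ℕ) (y x : Fin (d + 1) → ℝ) :
    star x ⬝ᵥ (toepFin d y).mulVec x = ∑ i, ∑ j, x i * x j * toepFin d y i j := by
  simp only [dotProduct, Matrix.mulVec, star_trivial, Finset.mul_sum]
  exact Finset.sum_congr rfl fun i _ => Finset.sum_congr rfl fun j _ => by ring

end Toeplitz

section Fejer

/-- The cosine polynomial `∑ₖ cₖ (1 - k/(d+1)) yₖ cos (kθ)` with `c₀ = 1/π` and `cₖ = 2/π` for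
`k ≥ 1`: the Fejér partial sum of any function whose cosine moments on `[0, π]` start with `y`. -/
noncomputable def fejerSum (d : ℕ) : (Fin (d + 1) → ℝ) →ₗ[ℝ] C(ℝ, ℝ) :=
  Fintype.linearCombination ℝ fun k =>
    ((if (k : ℕ) = 0 then 1 else 2) / π * (1 - k / (d + 1))) • cosMode k

/-- The cosine moments `∫₀^π cos (kθ) g(θ) dθ` with `k ≤ d`. -/
noncomputable def cosMoments (d : ℕ) : C(ℝ, ℝ) →ₗ[ℝ] (Fin (d + 1) → ℝ) :=
  LinearMap.pi fun k => intZeroPi ∘ₗ LinearMap.mulLeft ℝ (cosMode k)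

/-- The Fejér mean of order `d` on `[0, π]`. -/
noncomputable def fejerMean (d : ℕ) : C(ℝ, ℝ) →ₗ[ℝ] C(ℝ, ℝ) := fejerSum d ∘ₗ cosMoments d

lemma fejerSum_apply (d : ℕ) (y : Fin (d + 1) → ℝ) :
    fejerSum d y =
      ∑ k, y k • ((if (k : ℕ) = 0 then 1 else 2) / π * (1 - (k : ℝ) / (d + 1))) • cosMode k :=
  rfl

lemma cosMoments_apply (d : ℕ) (g : C(ℝ, ℝ)) (k : Fin (d + 1)) :
    cosMoments d g k = intZeroPi (cosMode k * g) := rfl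

lemma cosMoments_zero (d : ℕ) (g : C(ℝ, ℝ)) : cosMoments d g 0 = intZeroPi g := by
  simp [cosMoments_apply, cosMode_zero]

lemma fejerSum_eq_sum_sum_toepFin (d : ℕ) (y : Fin (d + 1) → ℝ) (θ : ℝ) :
    π * (d + 1) * fejerSum d y θ =
      ∑ i : Fin (d + 1), ∑ j : Fin (d + 1),
        (cosMode i θ * cosMode j θ + sinMode i θ * sinMode j θ) * toepFin d y i j := by
  have hfejer : π * (d + 1) * fejerSum d y θ =
      ∑ k : Fin (d + 1), (if (k : ℕ) = 0 then 1 else 2) * (d + 1 - k) * (y k * cosMode k θ) := by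
    simp only [fejerSum_apply, ContinuousMap.sum_apply, ContinuousMap.smul_apply, smul_eq_mul,
      Finset.mul_sum]
    refine Finset.sum_congr rfl fun k _ => ?_
    field_simp
  rw [hfejer, ← sum_sum_toepFin d fun k => y k * cosMode k θ]
  refine Finset.sum_congr rfl fun i _ => Finset.sum_congr rfl fun j _ => ?_
  exact (mul_comm _ _).trans
    (congrArg (· * toepFin d y i j) (DFunLike.congr_fun (cosMode_natAbs_sub i j) θ))

lemma fejerSum_nonneg {d : ℕ} {y : Fin (d + 1) → ℝ} (hy : (toepFin d y).PosSemidef) :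
    0 ≤ fejerSum d y := fun θ => by
  have hcos := hy.dotProduct_mulVec_nonneg fun i => cosMode i θ
  have hsin := hy.dotProduct_mulVec_nonneg fun i => sinMode i θ
  rw [star_dotProduct_toepFin_mulVec] at hcos hsin
  have h : 0 ≤ π * (d + 1) * fejerSum d y θ := by
    rw [fejerSum_eq_sum_sum_toepFin]
    simpa only [add_mul, Finset.sum_add_distrib] using add_nonneg hcos hsin
  exact nonneg_of_mul_nonneg_right h (by positivity)

lemma intZeroPi_fejerSum (d : ℕ) (y : Fin (d + 1) → ℝ) : intZeroPi (fejerSum d y) = y 0 := by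
  simp only [fejerSum_apply, map_sum, map_smul, intZeroPi_cosMode, smul_eq_mul]
  rw [Fin.sum_univ_succ]
  simp [pi_ne_zero]

lemma l1ZeroPi_fejerSum_sub_le {d : ℕ} {yp ym : Fin (d + 1) → ℝ}
    (hp : (toepFin d yp).PosSemidef) (hm : (toepFin d ym).PosSemidef) :
    l1ZeroPi (fejerSum d (yp - ym)) ≤ yp 0 + ym 0 := by
  rw [map_sub]
  refine (map_sub_le_add l1ZeroPi _ _).trans_eq ?_
  rw [l1ZeroPi_of_nonneg (fejerSum_nonneg hp), l1ZeroPi_of_nonneg (fejerSum_nonneg hm),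
    intZeroPi_fejerSum, intZeroPi_fejerSum]

lemma sum_sum_toepFin_cosMoments (d : ℕ) (g : C(ℝ, ℝ)) (x : Fin (d + 1) → ℝ) :
    ∑ i, ∑ j, x i * x j * toepFin d (cosMoments d g) i j =
      intZeroPi (((∑ i, x i • cosMode i) ^ 2 + (∑ i, x i • sinMode i) ^ 2) * g) := by
  have hentry (i j : Fin (d + 1)) : toepFin d (cosMoments d g) i j =
      intZeroPi ((cosMode i * cosMode j + sinMode i * sinMode j) * g) := by
    rw [← cosMode_natAbs_sub]
    rfl
  have hsquares : (∑ i, x i • cosMode i) ^ 2 + (∑ i, x i • sinMode i) ^ 2 =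
      ∑ i, ∑ j, (x i * x j) • (cosMode i * cosMode j + sinMode i * sinMode j) := by
    simp only [sq, Finset.sum_mul_sum, smul_mul_smul_comm, smul_add, Finset.sum_add_distrib]
  simp only [hentry, hsquares, Finset.sum_mul, map_sum, smul_mul_assoc, map_smul, smul_eq_mul]

lemma posSemidef_toepFin_cosMoments (d : ℕ) {g : C(ℝ, ℝ)} (hg : 0 ≤ g) :
    (toepFin d (cosMoments d g)).PosSemidef := by
  refine Matrix.PosSemidef.of_dotProduct_mulVec_nonneg ?_ fun x => ?_
  · ext i j
    simp only [Matrix.conjTranspose_apply, star_trivial, toepFin]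
    refine congrArg _ (Fin.ext ?_)
    dsimp only
    omega
  · rw [star_dotProduct_toepFin_mulVec, sum_sum_toepFin_cosMoments, ← map_zero intZeroPi]
    exact intZeroPi_mono fun θ _ => 
      mul_nonneg (add_nonneg (sq_nonneg _) (sq_nonneg _)) (hg θ)

lemma exists_posSemidef_sub_eq_cosMoments (d : ℕ) (g : C(ℝ, ℝ)) :
    ∃ yp ym : Fin (d + 1) → ℝ, yp - ym = cosMoments d g ∧ (toepFin d yp).PosSemidef ∧
      (toepFin d ym).PosSemidef ∧ yp 0 + ym 0 = l1ZeroPi g := by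
  refine ⟨cosMoments d g⁺, cosMoments d g⁻, ?_, posSemidef_toepFin_cosMoments d (posPart_nonneg g),
    posSemidef_toepFin_cosMoments d (negPart_nonneg g), ?_⟩
  · rw [← map_sub, posPart_sub_negPart]
  · rw [cosMoments_zero, cosMoments_zero, ← map_add, posPart_add_negPart, l1ZeroPi_apply]

lemma l1ZeroPi_fejerMean_le (d : ℕ) (g : C(ℝ, ℝ)) :
    l1ZeroPi (fejerMean d g) ≤ l1ZeroPi g := by
  obtain ⟨yp, ym, hsub, hp, hm, hl1⟩ := exists_posSemidef_sub_eq_cosMoments d g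
  rw [← hl1, fejerMean, LinearMap.comp_apply, ← hsub]
  exact l1ZeroPi_fejerSum_sub_le hp hm

lemma one_sub_mul_l1ZeroPi_le {d : ℕ} {g : C(ℝ, ℝ)} {ε : ℝ} {yp ym : Fin (d + 1) → ℝ}
    (hε : l1ZeroPi (fejerMean d g - g) ≤ ε * l1ZeroPi g) (hsub : yp - ym = cosMoments d g)
    (hp : (toepFin d yp).PosSemidef) (hm : (toepFin d ym).PosSemidef) :
    (1 - ε) * l1ZeroPi g ≤ yp 0 + ym 0 := by
  have hfejer : l1ZeroPi (fejerMean d g) ≤ yp 0 + ym 0 := by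
    rw [fejerMean, LinearMap.comp_apply, ← hsub]
    exact l1ZeroPi_fejerSum_sub_le hp hm
  have htriangle := map_sub_le_add l1ZeroPi (fejerMean d g) (fejerMean d g - g)
  rw [sub_sub_cancel] at htriangle
  linarith

lemma fejerMean_cosMode {d j : ℕ} (hj : j ≤ d) :
    fejerMean d (cosMode j) = (1 - (j : ℝ) / (d + 1)) • cosMode j := by
  simp only [fejerMean, LinearMap.comp_apply, fejerSum_apply, cosMoments_apply,
    intZeroPi_cosMode_mul_cosMode]
  rw [Finset.sum_eq_single ⟨j, by omega⟩]
  · rw [if_pos rfl, smul_smul]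
    congr 1
    split_ifs <;> field_simp
  · intro k _ hk
    rw [if_neg fun h => hk (Fin.ext h), zero_smul]
  · simp

end Fejer

section FejerConvergence

/-- The continuous functions that are the limit of their Fejér means in the `L¹` seminorm on
`[0, π]`; a submodule, so that convergence only has to be checked on a spanning set. -/
noncomputable def fejerConvergent : Submodule ℝ C(ℝ, ℝ) where
  carrier := {g | Tendsto (fun d => l1ZeroPi (fejerMean d g - g)) atTop (nhds 0)}
  zero_mem' := by simp
  add_mem' {f g} hf hg := by
    refine squeeze_zero (fun d => apply_nonneg _ _) (fun d => ?_) (by simpa using hf.add hg)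
    rw [map_add, add_sub_add_comm]
    exact map_add_le_add l1ZeroPi _ _
  smul_mem' c f hf := by
    simpa [← smul_sub, map_smul_eq_mul] using hf.const_mul |c|

lemma mem_fejerConvergent {g : C(ℝ, ℝ)} :
    g ∈ fejerConvergent ↔ Tendsto (fun d => l1ZeroPi (fejerMean d g - g)) atTop (nhds 0) :=
  Iff.rfl

lemma cosMode_mem_fejerConvergent (j : ℕ) : cosMode j ∈ fejerConvergent := by
  have herror : ∀ᶠ d : ℕ in atTop,
      (j : ℝ) / (d + 1) * l1ZeroPi (cosMode j) =
        l1ZeroPi (fejerMean d (cosMode j) - cosMode j) := by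
    filter_upwards [eventually_ge_atTop j] with d hd
    have hsub : fejerMean d (cosMode j) - cosMode j = -((j : ℝ) / (d + 1)) • cosMode j := by
      rw [fejerMean_cosMode hd]
      module
    rw [hsub, map_smul_eq_mul, norm_neg, Real.norm_of_nonneg (by positivity)]
  have hlim : Tendsto (fun d : ℕ => (j : ℝ) / (d + 1)) atTop (nhds 0) :=
    tendsto_const_nhds.div_atTop (tendsto_atTop_add_const_right _ _ tendsto_natCast_atTop_atTop)
  exact mem_fejerConvergent.2 (by simpa using (hlim.mul_const _).congr' herror)

lemma aeval_cosMode_one_T (j : ℕ) : aeval (cosMode 1) (Chebyshev.T ℝ j) = cosMode j := by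
  ext θ
  rw [aeval_continuousMap_apply, cosMode_apply, Nat.cast_one, one_mul, Chebyshev.T_real_cos,
    cosMode_apply, Int.cast_natCast]

lemma aeval_cosMode_one_mem_fejerConvergent (P : ℝ[X]) :
    aeval (cosMode 1) P ∈ fejerConvergent := by
  have hP : P ∈ Submodule.span ℝ (Set.range (Chebyshev.chebyshevTsequence ℝ)) := by
    rw [Polynomial.Sequence.span _ fun i =>
      (leadingCoeff_ne_zero.2 (Polynomial.Sequence.ne_zero _ i)).isUnit]
    exact Submodule.mem_top
  induction hP using Submodule.span_induction with
  | mem _ h =>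
    obtain ⟨j, rfl⟩ := h
    exact (aeval_cosMode_one_T j).symm ▸ cosMode_mem_fejerConvergent j
  | zero => simp
  | add _ _ _ _ hP hQ => simpa only [map_add] using add_mem hP hQ
  | smul c _ _ hP => simpa only [map_smul] using fejerConvergent.smul_mem c hP

lemma exists_l1ZeroPi_sub_aeval_cosMode_one_lt (g : C(ℝ, ℝ)) {ε : ℝ} (hε : 0 < ε) :
    ∃ P : ℝ[X], l1ZeroPi (g - aeval (cosMode 1) P) < ε := by
  obtain ⟨P, hP⟩ := exists_polynomial_near_of_continuousOn (-1) 1 (g ∘ arccos)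
    (by fun_prop) (ε / (2 * π)) (by positivity)
  refine ⟨P, (l1ZeroPi_le_of_abs_le (g := ContinuousMap.const ℝ (ε / (2 * π)))
    fun θ hθ => ?_).trans_lt ?_⟩
  · have hnear := hP (cos θ) (cos_mem_Icc θ)
    rw [Function.comp_apply, arccos_cos hθ.1 hθ.2, abs_sub_comm] at hnear
    simpa [cosMode_apply] using hnear.le
  · have hconst : intZeroPi (ContinuousMap.const ℝ (ε / (2 * π))) = ε / 2 := by
      simp only [intZeroPi_apply, ContinuousMap.const_apply, intervalIntegral.integral_const,
        sub_zero, smul_eq_mul]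
      field_simp
    linarith

lemma tendsto_l1ZeroPi_fejerMean_sub (g : C(ℝ, ℝ)) :
    Tendsto (fun d => l1ZeroPi (fejerMean d g - g)) atTop (nhds 0) := by
  refine tendsto_order.2 ⟨fun c hc => .of_forall fun d => hc.trans_le (apply_nonneg _ _),
    fun ε hε => ?_⟩
  obtain ⟨P, hP⟩ := exists_l1ZeroPi_sub_aeval_cosMode_one_lt g (show 0 < ε / 3 by positivity)
  have hconv := mem_fejerConvergent.1 (aeval_cosMode_one_mem_fejerConvergent P)
  filter_upwards [hconv.eventually_lt_const (show 0 < ε / 3 by positivity)] with d hd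
  set h := aeval (cosMode 1) P
  have hsplit : fejerMean d g - g =
      fejerMean d (g - h) - (g - h) + (fejerMean d h - h) := by
    rw [map_sub]
    abel
  calc l1ZeroPi (fejerMean d g - g)
      ≤ l1ZeroPi (fejerMean d (g - h)) + l1ZeroPi (g - h) + l1ZeroPi (fejerMean d h - h) := by
        rw [hsplit]
        exact (map_add_le_add _ _ _).trans (by gcongr; exact map_sub_le_add _ _ _)
    _ < ε := by linarith [l1ZeroPi_fejerMean_le d (g - h)]

lemma eventually_forall_l1ZeroPi_fejerMean_sub_le {ι : Type*} [Fintype ι] (g : ι → C(ℝ, ℝ)) {C : ℝ}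
    (hC : ∀ q : ι → ℝ, ∀ i, |q i| ≤ C * l1ZeroPi (Fintype.linearCombination ℝ g q))
    {ε : ℝ} (hε : 0 < ε) :
    ∀ᶠ d in atTop, ∀ q : ι → ℝ,
      l1ZeroPi (fejerMean d (Fintype.linearCombination ℝ g q) - Fintype.linearCombination ℝ g q) ≤
        ε * l1ZeroPi (Fintype.linearCombination ℝ g q) := by
  have hlim : Tendsto (fun d => C * ∑ i, l1ZeroPi (fejerMean d (g i) - g i)) atTop (nhds 0) := by
    simpa using (tendsto_finsetSum _ fun i _ => tendsto_l1ZeroPi_fejerMean_sub (g i)).const_mul C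
  filter_upwards [hlim.eventually_le_const hε] with d hd q
  set G := Fintype.linearCombination ℝ g q with hG
  have hsum : fejerMean d G - G = ∑ i, q i • (fejerMean d (g i) - g i) := by
    simp only [hG, Fintype.linearCombination_apply, map_sum, map_smul, smul_sub,
      Finset.sum_sub_distrib]
  calc l1ZeroPi (fejerMean d G - G)
      ≤ ∑ i, |q i| * l1ZeroPi (fejerMean d (g i) - g i) := by
        rw [hsum]
        simpa only [map_smul_eq_mul, Real.norm_eq_abs] using
          Finset.le_sum_of_subadditive l1ZeroPi (map_zero l1ZeroPi).le (map_add_le_add l1ZeroPi)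
            Finset.univ fun i => q i • (fejerMean d (g i) - g i)
    _ ≤ ∑ i, C * l1ZeroPi G * l1ZeroPi (fejerMean d (g i) - g i) := by
        gcongr with i
        exact hC q i
    _ = (C * ∑ i, l1ZeroPi (fejerMean d (g i) - g i)) * l1ZeroPi G := by
        rw [← Finset.mul_sum]
        ring
    _ ≤ ε * l1ZeroPi G := by gcongr

end FejerConvergence

section Segment

/-- A weight on `s`: a function that is continuous and strictly positive there. -/
structure IsWeightOn (w : ℝ → ℝ) (s : Set ℝ) : Prop where
  continuousOn : ContinuousOn w s
  pos : ∀ x ∈ s, 0 < w x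

lemma IsWeightOn.mono {w : ℝ → ℝ} {s t : Set ℝ} (hw : IsWeightOn w t) (h : s ⊆ t) :
    IsWeightOn w s :=
  ⟨hw.continuousOn.mono h, fun x hx => hw.pos x (h hx)⟩

/-- The parametrisation of `[a, b]` by `θ ∈ [0, π]` through the cosine; it runs from `b` to `a`. -/
noncomputable def segmentParam (a b θ : ℝ) : ℝ := ((b - a) * cos θ + a + b) / 2

/-- The reciprocal `1 / w` of a weight on `[a, b]`, in the angular variable of `segmentParam`.
It is set to `0` when this reciprocal is not continuous. -/
noncomputable def inverseWeight (a b : ℝ) (w : ℝ → ℝ) : C(ℝ, ℝ) :=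
  ContinuousMap.mkD (fun θ => (w (segmentParam a b θ))⁻¹) 0

/-- The function `θ ↦ P (t) sin θ / w (t)`, `t = segmentParam a b θ`, where `q` lists the
second-kind Chebyshev coefficients of the transplantation of `P` from `[a, b]` to `[-1, 1]`. Up to
the factor `(b - a) / 2`, its `L¹` seminorm on `[0, π]` is the weighted norm of `P` on `[a, b]`;
its cosine moments are the entries of `J q`. -/
noncomputable def chebyshevDensity (a b : ℝ) (w : ℝ → ℝ) (N : ℕ) :
    (Fin (N + 1) → ℝ) →ₗ[ℝ] C(ℝ, ℝ) :=
  Fintype.linearCombination ℝ fun n => sinMode (n + 1) * inverseWeight a b w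

variable {a b : ℝ} {w : ℝ → ℝ} {N : ℕ}

lemma segmentParam_mem_Icc (hab : a ≤ b) (θ : ℝ) : segmentParam a b θ ∈ Set.Icc a b := by
  constructor <;> unfold segmentParam <;> nlinarith [neg_one_le_cos θ, cos_le_one θ]

lemma continuous_segmentParam (a b : ℝ) : Continuous (segmentParam a b) := by
  unfold segmentParam
  fun_prop

lemma hasDerivAt_segmentParam (a b θ : ℝ) :
    HasDerivAt (segmentParam a b) (-((b - a) / 2 * sin θ)) θ := by
  have h := ((((hasDerivAt_cos θ).const_mul (b - a)).add_const a).add_const b).div_const 2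
  convert! h using 1
  ring

lemma IsWeightOn.inverseWeight_apply (hw : IsWeightOn w (Set.Icc a b)) (hab : a ≤ b)
    (θ : ℝ) :
    inverseWeight a b w θ = (w (segmentParam a b θ))⁻¹ := by
  have hcont : Continuous fun θ => (w (segmentParam a b θ))⁻¹ :=
    (hw.continuousOn.comp_continuous (continuous_segmentParam a b)
      (segmentParam_mem_Icc hab)).inv₀ fun θ => (hw.pos _ (segmentParam_mem_Icc hab θ)).ne'
  rw [inverseWeight, ContinuousMap.mkD_apply_of_continuous hcont]

lemma chebyshevDensity_apply (q : Fin (N + 1) → ℝ) (θ : ℝ) :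
    chebyshevDensity a b w N q θ =
      (∑ n : Fin (N + 1), q n * sinMode (n + 1) θ) * inverseWeight a b w θ := by
  simp [chebyshevDensity, Fintype.linearCombination_apply, Finset.sum_mul, mul_assoc]

lemma eval_sum_C_mul_U_mul_sin (q : Fin (N + 1) → ℝ) (θ : ℝ) :
    (∑ n : Fin (N + 1), C (q n) * Chebyshev.U ℝ (n : ℕ)).eval (cos θ) * sin θ =
      ∑ n : Fin (N + 1), q n * sinMode (n + 1) θ := by
  simp only [eval_finsetSum, eval_mul, eval_C, Finset.sum_mul, mul_assoc, Chebyshev.U_real_cos,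
    sinMode_apply, Int.cast_natCast, Nat.cast_add, Nat.cast_one]

lemma eval_transplant_cos (a b : ℝ) (P : ℝ[X]) (θ : ℝ) :
    (transplant a b P).eval (cos θ) = P.eval (segmentParam a b θ) := by
  simp only [transplant, segmentParam, eval_comp, eval_add, eval_mul, eval_C, eval_X]
  congr 1
  ring

lemma natDegree_transplant_le (a b : ℝ) (P : ℝ[X]) :
    (transplant a b P).natDegree ≤ P.natDegree :=
  natDegree_comp_le.trans (mul_le_of_le_one_right (Nat.zero_le _) natDegree_linear_le)

lemma integral_eq_integral_segmentParam (hab : a ≤ b) (f : ℝ → ℝ) :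
    ∫ t in a..b, f t = (b - a) / 2 * ∫ θ in (0 : ℝ)..π, f (segmentParam a b θ) * sin θ := by
  have hsubst : (∫ θ in (0 : ℝ)..π, (f ∘ segmentParam a b) θ * -((b - a) / 2 * sin θ)) =
      ∫ t in segmentParam a b 0..segmentParam a b π, f t := by
    refine integral_comp_mul_deriv_of_deriv_nonpos (continuous_segmentParam a b).continuousOn
      (fun θ _ => hasDerivAt_segmentParam a b θ) fun θ hθ => ?_
    rw [min_eq_left pi_pos.le, max_eq_right pi_pos.le] at hθ
    have := mul_nonneg (sub_nonneg.2 hab) (sin_pos_of_mem_Ioo hθ).le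
    linarith
  have hzero : segmentParam a b 0 = b := by simp [segmentParam]
  have hpi : segmentParam a b π = a := by
    rw [segmentParam, cos_pi]
    ring
  rw [hzero, hpi] at hsubst
  rw [integral_symm, ← hsubst, ← intervalIntegral.integral_neg,
    ← intervalIntegral.integral_const_mul]
  exact integral_congr fun θ _ => by simp only [Function.comp_apply]; ring

lemma integral_abs_eval_div_eq_l1ZeroPi (hab : a ≤ b) (hw : IsWeightOn w (Set.Icc a b))
    {P : ℝ[X]} {q : Fin (N + 1) → ℝ}
    (hq : transplant a b P = ∑ n : Fin (N + 1), C (q n) * Chebyshev.U ℝ (n : ℕ)) :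
    ∫ t in a..b, |P.eval t| / w t = (b - a) / 2 * l1ZeroPi (chebyshevDensity a b w N q) := by
  rw [integral_eq_integral_segmentParam hab, l1ZeroPi_apply, intZeroPi_apply]
  congr 1
  refine integral_congr fun θ hθ => ?_
  rw [Set.uIcc_of_le pi_pos.le] at hθ
  have hwpos := hw.pos _ (segmentParam_mem_Icc hab θ)
  simp only [ContinuousMap.abs_apply, chebyshevDensity_apply, ← eval_sum_C_mul_U_mul_sin, ← hq,
    eval_transplant_cos, hw.inverseWeight_apply hab, abs_mul, abs_inv, abs_of_pos hwpos,
    abs_of_nonneg (sin_nonneg_of_mem_Icc hθ)]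
  ring

lemma sum_Jent_mul_eq_cosMoments (hab : a ≤ b) (hw : IsWeightOn w (Set.Icc a b)) (d : ℕ)
    (q : Fin (N + 1) → ℝ) (k : Fin (d + 1)) :
    ∑ n : Fin (N + 1), Jent a b w k n * q n = cosMoments d (chebyshevDensity a b w N q) k := by
  have hJent (n : Fin (N + 1)) :
      Jent a b w k n = intZeroPi (cosMode k * (sinMode (n + 1) * inverseWeight a b w)) := by
    refine integral_congr fun θ _ => ?_
    simp [hw.inverseWeight_apply hab, cosMode_apply, sinMode_apply, segmentParam, mul_assoc,
      div_eq_mul_inv]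
  simp only [hJent, cosMoments_apply, chebyshevDensity, Fintype.linearCombination_apply,
    Finset.mul_sum, map_sum, mul_smul_comm, map_smul, smul_eq_mul, mul_comm (q _)]

lemma intZeroPi_sum_sinMode_mul_sinMode (q : Fin (N + 1) → ℝ) (n : Fin (N + 1)) :
    intZeroPi ((∑ m : Fin (N + 1), q m • sinMode (m + 1)) * sinMode (n + 1)) = π / 2 * q n := by
  simp only [Finset.sum_mul, smul_mul_assoc, map_sum, map_smul, smul_eq_mul,
    intZeroPi_sinMode_mul_sinMode, Fin.val_inj, mul_ite, mul_zero, Finset.sum_ite_eq',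
    Finset.mem_univ, if_true]
  exact mul_comm _ _

lemma exists_forall_abs_le_mul_l1ZeroPi_chebyshevDensity (hab : a ≤ b)
    (hw : IsWeightOn w (Set.Icc a b)) (N : ℕ) :
    ∃ C : ℝ, ∀ q : Fin (N + 1) → ℝ, ∀ n, |q n| ≤ C * l1ZeroPi (chebyshevDensity a b w N q) := by
  obtain ⟨M, hM⟩ := isCompact_Icc.bddAbove_image hw.continuousOn
  refine ⟨2 / π * M, fun q n => ?_⟩
  set S : C(ℝ, ℝ) := ∑ m : Fin (N + 1), q m • sinMode (m + 1) with hS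
  set G := chebyshevDensity a b w N q with hG
  have hpointwise (θ : ℝ) : |(S * sinMode (n + 1)) θ| ≤ (M • |G|) θ := by
    have hwM := hM (Set.mem_image_of_mem w (segmentParam_mem_Icc hab θ))
    have hwpos := hw.pos _ (segmentParam_mem_Icc hab θ)
    have hSG : S θ = G θ * w (segmentParam a b θ) := by
      rw [hG, chebyshevDensity_apply, hw.inverseWeight_apply hab, inv_mul_cancel_right₀ hwpos.ne']
      simp [hS]
    calc |(S * sinMode (n + 1)) θ|
        ≤ |S θ| := by
          rw [ContinuousMap.mul_apply, abs_mul]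
          exact mul_le_of_le_one_right (abs_nonneg _) (abs_sin_le_one _)
      _ = w (segmentParam a b θ) * |G θ| := by rw [hSG, abs_mul, abs_of_pos hwpos, mul_comm]
      _ ≤ M * |G θ| := by gcongr
  have hcoeff : π / 2 * |q n| ≤ M * l1ZeroPi G := by
    calc π / 2 * |q n|
        = |intZeroPi (S * sinMode (n + 1))| := by
          rw [intZeroPi_sum_sinMode_mul_sinMode, abs_mul, abs_of_pos pi_div_two_pos]
      _ ≤ l1ZeroPi (S * sinMode (n + 1)) := abs_intZeroPi_le _
      _ ≤ intZeroPi (M • |G|) := l1ZeroPi_le_of_abs_le fun θ _ => hpointwise θ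
      _ = M * l1ZeroPi G := by rw [map_smul, smul_eq_mul, l1ZeroPi_apply]
  calc |q n| = 2 / π * (π / 2 * |q n|) := by field_simp
    _ ≤ 2 / π * (M * l1ZeroPi G) := by gcongr
    _ = 2 / π * M * l1ZeroPi G := (mul_assoc _ _ _).symm

end Segment

section ErsatzNorm

lemma exists_eq_sum_C_mul_U {K : Type*} [Field K] [NeZero (2 : K)] {N : ℕ} {P : K[X]}
    (hP : P.natDegree ≤ N) :
    ∃ q : Fin (N + 1) → K, P = ∑ n : Fin (N + 1), C (q n) * Chebyshev.U K (n : ℕ) := by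
  let S : Polynomial.Sequence K := ⟨fun n => Chebyshev.U K n, Chebyshev.degree_U_natCast K⟩
  have hspan := S.span_degreeLE (m := N) fun i _ => (leadingCoeff_ne_zero.2 (S.ne_zero i)).isUnit
  have hrange : Set.range (fun n : Fin (N + 1) => S n) = S '' Set.Iic N := by
    ext Q
    simp [Fin.exists_iff, Order.lt_add_one_iff]
  have hmem : P ∈ Submodule.span K (Set.range fun n : Fin (N + 1) => S n) := by
    rw [hrange, hspan, mem_degreeLE]
    exact natDegree_le_iff_degree_le.1 hP
  obtain ⟨q, hq⟩ := (Submodule.mem_span_range_iff_exists_fun K).1 hmem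
  refine ⟨q, ?_⟩
  simp only [← smul_eq_C_mul]
  exact hq.symm

lemma csInf_mem_Icc {α : Type*} [ConditionallyCompleteLattice α] {S : Set α} {l x : α} (hx : x ∈ S)
    (hl : l ∈ lowerBounds S) :
    sInf S ∈ Set.Icc l x :=
  ⟨le_csInf ⟨x, hx⟩ hl, csInf_le ⟨l, hl⟩ hx⟩

variable {L : ℕ} {a b : ℕ → ℝ} {w : ℝ → ℝ}

lemma L1K_pos (hL : 0 < L) (hab : ∀ ℓ < L, a ℓ < b ℓ)
    (hw : ∀ ℓ < L, IsWeightOn w (Set.Icc (a ℓ) (b ℓ))) {P : ℝ[X]} (hP : P ≠ 0) :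
    0 < L1K L a b w P := by
  refine Finset.sum_pos (fun ℓ hℓ => ?_) ⟨0, Finset.mem_range.2 hL⟩
  rw [Finset.mem_range] at hℓ
  obtain ⟨c, hc, hPc⟩ : ∃ c ∈ Set.Icc (a ℓ) (b ℓ), P.eval c ≠ 0 := by
    by_contra! hroots
    exact hP (eq_zero_of_infinite_isRoot P ((Set.Icc_infinite (hab ℓ hℓ)).mono hroots))
  refine integral_pos (hab ℓ hℓ) ?_ (fun x hx => ?_) ⟨c, hc, ?_⟩
  · exact (by fun_prop : Continuous fun t => |P.eval t|).continuousOn.div (hw ℓ hℓ).continuousOn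
      fun x hx => ((hw ℓ hℓ).pos x hx).ne'
  · exact div_nonneg (abs_nonneg _) ((hw ℓ hℓ).pos x (Set.Ioc_subset_Icc_self hx)).le
  · exact div_pos (abs_pos.2 hPc) ((hw ℓ hℓ).pos c hc)

variable {N : ℕ}

lemma L1K_eq_sum_l1ZeroPi (hab : ∀ ℓ < L, a ℓ ≤ b ℓ)
    (hw : ∀ ℓ < L, IsWeightOn w (Set.Icc (a ℓ) (b ℓ))) {P : ℝ[X]} {q : ℕ → Fin (N + 1) → ℝ}
    (hq : ∀ ℓ < L, transplant (a ℓ) (b ℓ) P =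
      ∑ n : Fin (N + 1), C (q ℓ n) * Chebyshev.U ℝ (n : ℕ)) :
    L1K L a b w P = ∑ ℓ ∈ Finset.range L,
      (b ℓ - a ℓ) / 2 * l1ZeroPi (chebyshevDensity (a ℓ) (b ℓ) w N (q ℓ)) :=
  Finset.sum_congr rfl fun ℓ hℓ =>
    have hℓ := Finset.mem_range.1 hℓ
    integral_abs_eval_div_eq_l1ZeroPi (hab ℓ hℓ) (hw ℓ hℓ) (hq ℓ hℓ)

lemma ersatz_mem_Icc (hab : ∀ ℓ < L, a ℓ ≤ b ℓ)
    (hw : ∀ ℓ < L, IsWeightOn w (Set.Icc (a ℓ) (b ℓ))) {P : ℝ[X]} (hP : P.natDegree ≤ N)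
    {d : ℕ} {ε : ℝ}
    (hε : ∀ ℓ < L, ∀ q, l1ZeroPi (fejerMean d (chebyshevDensity (a ℓ) (b ℓ) w N q) -
      chebyshevDensity (a ℓ) (b ℓ) w N q) ≤ ε * l1ZeroPi (chebyshevDensity (a ℓ) (b ℓ) w N q)) :
    ersatz L N d a b w P ∈ Set.Icc ((1 - ε) * L1K L a b w P) (L1K L a b w P) := by
  refine csInf_mem_Icc ?_ ?_
  · choose q hq using fun ℓ =>
      exists_eq_sum_C_mul_U ((natDegree_transplant_le (a ℓ) (b ℓ) P).trans hP)
    choose yp ym hsub hp hm hl1 using fun ℓ =>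
      exists_posSemidef_sub_eq_cosMoments d (chebyshevDensity (a ℓ) (b ℓ) w N (q ℓ))
    refine ⟨q, fun ℓ _ => hq ℓ, yp, ym, fun ℓ hℓ k => ?_, fun ℓ _ => ⟨hp ℓ, hm ℓ⟩, ?_⟩
    · rw [sum_Jent_mul_eq_cosMoments (hab ℓ hℓ) (hw ℓ hℓ), ← hsub, Pi.sub_apply]
    · simp only [L1K_eq_sum_l1ZeroPi hab hw fun ℓ _ => hq ℓ, hl1]
  · rintro _ ⟨q, hq, yp, ym, hsub, hpsd, rfl⟩
    rw [L1K_eq_sum_l1ZeroPi hab hw hq, Finset.mul_sum]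
    refine Finset.sum_le_sum fun ℓ hℓ => ?_
    rw [Finset.mem_range] at hℓ
    have hmoments : yp ℓ - ym ℓ = cosMoments d (chebyshevDensity (a ℓ) (b ℓ) w N (q ℓ)) :=
      funext fun k => (hsub ℓ hℓ k).trans
        (sum_Jent_mul_eq_cosMoments (hab ℓ hℓ) (hw ℓ hℓ) d (q ℓ) k)
    rw [mul_left_comm]
    exact mul_le_mul_of_nonneg_left
      (one_sub_mul_l1ZeroPi_le (hε ℓ hℓ _) hmoments (hpsd ℓ hℓ).1 (hpsd ℓ hℓ).2)
      (by linarith [hab ℓ hℓ])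

lemma ersatz_le_L1K (hab : ∀ ℓ < L, a ℓ ≤ b ℓ)
    (hw : ∀ ℓ < L, IsWeightOn w (Set.Icc (a ℓ) (b ℓ))) {P : ℝ[X]} (hP : P.natDegree ≤ N)
    (d : ℕ) : ersatz L N d a b w P ≤ L1K L a b w P := by
  refine (ersatz_mem_Icc (ε := 2) hab hw hP fun ℓ _ q => ?_).2
  set g := chebyshevDensity (a ℓ) (b ℓ) w N q
  linarith [map_sub_le_add l1ZeroPi (fejerMean d g) g, l1ZeroPi_fejerMean_le d g]

lemma eventually_one_sub_mul_L1K_le_ersatz (hab : ∀ ℓ < L, a ℓ ≤ b ℓ)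
    (hw : ∀ ℓ < L, IsWeightOn w (Set.Icc (a ℓ) (b ℓ))) (N : ℕ) {ε : ℝ} (hε : 0 < ε) :
    ∀ᶠ d in atTop, ∀ P : ℝ[X], P.natDegree ≤ N →
      (1 - ε) * L1K L a b w P ≤ ersatz L N d a b w P := by
  have hfejer : ∀ᶠ d in atTop, ∀ ℓ ∈ Finset.range L, ∀ q,
      l1ZeroPi (fejerMean d (chebyshevDensity (a ℓ) (b ℓ) w N q) -
        chebyshevDensity (a ℓ) (b ℓ) w N q) ≤
          ε * l1ZeroPi (chebyshevDensity (a ℓ) (b ℓ) w N q) := by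
    refine (eventually_all_finset _).2 fun ℓ hℓ => ?_
    rw [Finset.mem_range] at hℓ
    obtain ⟨C, hC⟩ :=
      exists_forall_abs_le_mul_l1ZeroPi_chebyshevDensity (hab ℓ hℓ) (hw ℓ hℓ) N
    exact eventually_forall_l1ZeroPi_fejerMean_sub_le _ hC hε
  filter_upwards [hfejer] with d hd P hP
  exact (ersatz_mem_Icc hab hw hP fun ℓ hℓ => hd ℓ (Finset.mem_range.2 hℓ)).1

end ErsatzNorm

end

theorem relative_error_tendsto_zero_general
    (L : ℕ) (hL : 0 < L) (a b : ℕ → ℝ) (hab : ∀ ℓ < L, a ℓ < b ℓ)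
    (w : ℝ → ℝ)
    (hw : ContinuousOn w (⋃ ℓ ∈ Finset.range L, Set.Icc (a ℓ) (b ℓ)))
    (hwpos : ∀ x ∈ ⋃ ℓ ∈ Finset.range L, Set.Icc (a ℓ) (b ℓ), 0 < w x)
    (N : ℕ) (V : ℕ → Polynomial ℝ) (hV : ∀ d, N ≤ d → V d ≠ 0 ∧ (V d).natDegree ≤ N)
    (δ : ℕ → ℝ)
    (hδ : ∀ d, δ d = 1 - ersatz L N d a b w (V d) / L1K L a b w (V d)) :
    (∀ d, N ≤ d → 0 ≤ δ d) ∧ Tendsto δ atTop (nhds 0) := by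
  have hweight : ∀ ℓ < L, IsWeightOn w (Set.Icc (a ℓ) (b ℓ)) := fun ℓ hℓ =>
    IsWeightOn.mono ⟨hw, hwpos⟩
      (Set.subset_biUnion_of_mem (u := fun ℓ => Set.Icc (a ℓ) (b ℓ)) (Finset.mem_range.2 hℓ))
  have hab' : ∀ ℓ < L, a ℓ ≤ b ℓ := fun ℓ hℓ => (hab ℓ hℓ).le
  have hpos : ∀ d, N ≤ d → 0 < L1K L a b w (V d) := fun d hd => L1K_pos hL hab hweight (hV d hd).1
  have hnonneg : ∀ d, N ≤ d → 0 ≤ δ d := fun d hd => by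
    rw [hδ, sub_nonneg, div_le_one (hpos d hd)]
    exact ersatz_le_L1K hab' hweight (hV d hd).2 d
  refine ⟨hnonneg, tendsto_order.2 ⟨fun c hc => ?_, fun ε hε => ?_⟩⟩
  · filter_upwards [eventually_ge_atTop N] with d hd using hc.trans_le (hnonneg d hd)
  · filter_upwards [eventually_ge_atTop N,
      eventually_one_sub_mul_L1K_le_ersatz hab' hweight N (half_pos hε)] with d hd hlower
    have hratio := (le_div_iff₀ (hpos d hd)).2 (hlower (V d) (hV d hd).2)
    rw [hδ]
    linarith

/-- If the `L1` minimizer `U` among monic polynomials of degree `N` is unique and `V d`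
minimizes `⫽·⫽_d` among monic polynomials of degree `N` for each `d ≥ N`, then the
relative error `δ_d = 1 − ⫽V_d⫽_d / ‖V_d/w‖_{L1(K)}` is nonnegative for `d ≥ N` and tends
to `0` as `d → ∞`. -/
theorem relative_error_tendsto_zero
    (L : ℕ) (hL : 0 < L) (a b : ℕ → ℝ)
    (ha0 : a 0 = -1) (hbL : b (L - 1) = 1)
    (hab : ∀ ℓ < L, a ℓ < b ℓ)
    (hgap : ∀ ℓ, ℓ + 1 < L → b ℓ < a (ℓ + 1))
    (w : ℝ → ℝ)
    (hw : ContinuousOn w (⋃ ℓ ∈ Finset.range L, Set.Icc (a ℓ) (b ℓ)))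
    (hwpos : ∀ x ∈ ⋃ ℓ ∈ Finset.range L, Set.Icc (a ℓ) (b ℓ), 0 < w x)
    (N : ℕ) (hN : 1 ≤ N)
    (U : Polynomial ℝ) (hUmonic : U.Monic) (hUdeg : U.natDegree = N)
    (hUmin : ∀ Q : Polynomial ℝ, Q.Monic → Q.natDegree = N →
      L1K L a b w U ≤ L1K L a b w Q)
    (hUuniq : ∀ Q : Polynomial ℝ, Q.Monic → Q.natDegree = N →
      (∀ R : Polynomial ℝ, R.Monic → R.natDegree = N →
        L1K L a b w Q ≤ L1K L a b w R) → Q = U)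
    (V : ℕ → Polynomial ℝ)
    (hV : ∀ d, N ≤ d → (V d).Monic ∧ (V d).natDegree = N ∧
      ∀ Q : Polynomial ℝ, Q.Monic → Q.natDegree = N →
        ersatz L N d a b w (V d) ≤ ersatz L N d a b w Q)
    (δ : ℕ → ℝ)
    (hδ : ∀ d, δ d = 1 - ersatz L N d a b w (V d) / L1K L a b w (V d)) :
    (∀ d, N ≤ d → 0 ≤ δ d) ∧ Tendsto δ atTop (nhds 0) :=
  relative_error_tendsto_zero_general L hL a b hab w hw hwpos N V
    (fun d hd => ⟨(hV d hd).1.ne_zero, (hV d hd).2.1.le⟩) δ hδ
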